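/- arXiv:2407.01744 — 2 statements merged into one kernel-verified Lean document; each statement's English description precedes it below -/
import Mathlib

section
/- Let Z be a set of q ≥ 9 points in linear general position in ℙ⁴. Then no set of 3-dimensional quadric hypersurfaces in a general hyperplane projection situation applies; concretely: the image of Z under projection from a general point of ℙ⁴ to a hyperplane ℙ³ is not contained in two linearly independent quadric surfaces. -/
noncomputable section

/-- The underlying vector space of ℙ⁴ over ℂ. -/
abbrev V5 : Type := Fin 5 → ℂ

/-- ℙ⁴ over ℂ. -/
abbrev P4 : Type := Projectivization ℂ V5

/-- A family of points of ℙ⁴ is in linear general position (LGP) if the representatives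
of any at most 5 of them are linearly independent (no 3 collinear, no 4 coplanar, no 5
in a hyperplane). -/
def LGP {q : ℕ} (P : Fin q → P4) : Prop :=
  ∀ s : Finset (Fin q), s.card ≤ 5 →
    LinearIndependent ℂ (fun i : {x : Fin q // x ∈ s} => (P i.1).rep)

/-- The homogeneous polynomial `f` vanishes at all the points `P i`. -/
def VanishesOnPts {q : ℕ} (f : MvPolynomial (Fin 5) ℂ) (P : Fin q → P4) : Prop :=
  ∀ i, MvPolynomial.eval (P i).rep f = 0

/-- The hypersurface defined by `f` is a cone with vertex at (the point represented by)
`v`, i.e. `f` and all its partial derivatives vanish at `v`; for a quadric this says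
that the corresponding quadric in ℙ⁴ is singular at that point.  Projecting such a cone
from its vertex gives a quadric surface in ℙ³ containing the projected points. -/
def ConeWithVertex (f : MvPolynomial (Fin 5) ℂ) (v : V5) : Prop :=
  MvPolynomial.eval v f = 0 ∧ ∀ j, MvPolynomial.eval v (MvPolynomial.pderiv j f) = 0

section Helpers
open MvPolynomial

lemma lin2 {a b c d u w : ℂ} (h1 : a*u+b*w=0) (h2 : c*u+d*w=0) (hd : a*d-b*c ≠ 0) : u = 0 ∧ w = 0 := by
  constructor
  · apply (mul_eq_zero.1 (?_ : (a*d-b*c)*u = 0)).resolve_left hd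
    linear_combination d*h1 - b*h2
  · apply (mul_eq_zero.1 (?_ : (a*d-b*c)*w = 0)).resolve_left hd
    linear_combination a*h2 - c*h1

lemma ind5 {z : Fin 9 → V5} (h : ∀ f : Fin 5 → Fin 9, Function.Injective f → LinearIndependent ℂ (z ∘ f))
    (i0 i1 i2 i3 i4 : Fin 9) (hi : Function.Injective ![i0,i1,i2,i3,i4]) (c0 c1 c2 c3 c4 : ℂ)
    (hc : c0 • z i0 + c1 • z i1 + c2 • z i2 + c3 • z i3 + c4 • z i4 = 0) :
    c0 = 0 ∧ c1 = 0 ∧ c2 = 0 ∧ c3 = 0 ∧ c4 = 0 := by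
  have := Fintype.linearIndependent_iff.1 (h _ hi) ![c0,c1,c2,c3,c4] (by
    simpa [Fin.sum_univ_succ, add_assoc] using hc)
  exact ⟨this 0, this 1, this 2, this 3, this 4⟩

lemma span5 {z : Fin 9 → V5} (h : ∀ f : Fin 5 → Fin 9, Function.Injective f → LinearIndependent ℂ (z ∘ f))
    (v : V5) : ∃ c : Fin 5 → ℂ, v = c 0 • z 0 + c 1 • z 1 + c 2 • z 2 + c 3 • z 3 + c 4 • z 4 := by
  have hl := h ![0,1,2,3,4] (by decide)
  have hs := hl.span_eq_top_of_card_eq_finrank (by simp)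
  have hv : v ∈ Submodule.span ℂ (Set.range (z ∘ ![0,1,2,3,4])) := by rw [hs]; trivial
  obtain ⟨c, hc⟩ := (Submodule.mem_span_range_iff_exists_fun ℂ).1 hv
  refine ⟨c, ?_⟩
  rw [← hc]
  simp [Fin.sum_univ_succ, add_assoc]
  

lemma plane_zero (B : LinearMap.BilinForm ℂ V5) (hs : ∀ u v, B u v = B v u) (x u v : V5)
    (hx : ∀ w, B x w = 0) (hu : B u u = 0) (hv : B v v = 0) (a b c : ℂ) (w : V5) (hw : B w w = 0)
    (ha : a ≠ 0) (hb : b ≠ 0) (hx' : c • w = x + a • u + b • v) : B u v = 0 := by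
  have : B (c • w) (c • w) = 0 := by simp [hw]
  rw [hx'] at this
  have hxu : ∀ w, B w x = 0 := fun w => by rw [hs, hx]
  simp [hx, hxu, hu, hv, hs v u] at this
  have h2 : (2 * a * b) * B u v = 0 := by linear_combination this
  simpa [ha, hb] using h2

/-- The key configuration: projection from the intersection of the planes `⟨z0 z1 z2⟩` and `⟨z3 z4 z5⟩`. -/
lemma core (z : Fin 9 → V5) (h : ∀ f : Fin 5 → Fin 9, Function.Injective f → LinearIndependent ℂ (z ∘ f)) :
    ∃ x y : V5, x ≠ 0 ∧ ∀ B : LinearMap.BilinForm ℂ V5, (∀ u v, B u v = B v u) →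
      (∀ k, B (z k) (z k) = 0) → B y y = 0 → (∀ v, B x v = 0) → ∀ u v, B u v = 0 := by
  obtain ⟨a, ha⟩ := span5 h (z 5)
  have ha0 : a 0 ≠ 0 := fun h0 => by
    have := ind5 h 1 2 3 4 5 (by decide) (a 1) (a 2) (a 3) (a 4) (-1) (by
      rw [ha, h0]; module)
    simp at this
  have ha1 : a 1 ≠ 0 := fun h0 => by
    have := ind5 h 0 2 3 4 5 (by decide) (a 0) (a 2) (a 3) (a 4) (-1) (by
      rw [ha, h0]; module)
    simp at this
  have ha2 : a 2 ≠ 0 := fun h0 => by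
    have := ind5 h 0 1 3 4 5 (by decide) (a 0) (a 1) (a 3) (a 4) (-1) (by
      rw [ha, h0]; module)
    simp at this
  have ha3 : a 3 ≠ 0 := fun h0 => by
    have := ind5 h 0 1 2 4 5 (by decide) (a 0) (a 1) (a 2) (a 4) (-1) (by
      rw [ha, h0]; module)
    simp at this
  have ha4 : a 4 ≠ 0 := fun h0 => by
    have := ind5 h 0 1 2 3 5 (by decide) (a 0) (a 1) (a 2) (a 3) (-1) (by
      rw [ha, h0]; module)
    simp at this
  obtain ⟨x, hx⟩ : ∃ x, x = a 0 • z 0 + a 1 • z 1 + a 2 • z 2 := ⟨_, rfl⟩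
  have hx5 : x = z 5 - a 3 • z 3 - a 4 • z 4 := by rw [hx, ha]; module
  have dec : ∀ v : V5, ∃ α β t γ δ : ℂ, v = α • z 0 + β • z 1 + t • x + γ • z 3 + δ • z 4 := by
    intro v
    obtain ⟨c, hc⟩ := span5 h v
    refine ⟨c 0 - c 2 / a 2 * a 0, c 1 - c 2 / a 2 * a 1, c 2 / a 2, c 3, c 4, ?_⟩
    rw [hc, hx]
    have : c 2 = c 2 / a 2 * a 2 := by field_simp
    nth_rw 1 [this]
    module
  choose α β t γ δ hd using dec
  have D : ∀ i j : Fin 9, Function.Injective ![i, j, 3, 4, 5] →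
      α (z i) * β (z j) - β (z i) * α (z j) ≠ 0 := by
    intro i j hij h0
    have e1 := ind5 h i j 3 4 5 hij (β (z j)) (-β (z i))
      (-(β (z j) * γ (z i) - β (z i) * γ (z j)) + (β (z j) * t (z i) - β (z i) * t (z j)) * a 3)
      (-(β (z j) * δ (z i) - β (z i) * δ (z j)) + (β (z j) * t (z i) - β (z i) * t (z j)) * a 4)
      (-(β (z j) * t (z i) - β (z i) * t (z j))) (by
        have hi := hd (z i)
        have hj := hd (z j)
        rw [hx5] at hi hj
        have h00 : (α (z i) * β (z j) - β (z i) * α (z j)) • z 0 = 0 := by rw [h0, zero_smul]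
        linear_combination (norm := module) (β (z j)) • hi - (β (z i)) • hj + h00)
    have bj : β (z j) = 0 := e1.1
    have bi : β (z i) = 0 := by simpa using e1.2.1
    have e2 := ind5 h i j 3 4 5 hij (α (z j)) (-α (z i))
      (-(α (z j) * γ (z i) - α (z i) * γ (z j)) + (α (z j) * t (z i) - α (z i) * t (z j)) * a 3)
      (-(α (z j) * δ (z i) - α (z i) * δ (z j)) + (α (z j) * t (z i) - α (z i) * t (z j)) * a 4)
      (-(α (z j) * t (z i) - α (z i) * t (z j))) (by
        have hi := hd (z i)
        have hj := hd (z j)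
        rw [hx5, bi] at hi 
        rw [hx5, bj] at hj
        linear_combination (norm := module) (α (z j)) • hi - (α (z i)) • hj)
    have ai : α (z i) = 0 := by simpa using e2.2.1
    have e3 := ind5 h i j 3 4 5 hij 1 0 (-γ (z i) + t (z i) * a 3) (-δ (z i) + t (z i) * a 4) (-t (z i)) (by
        have hi := hd (z i)
        rw [hx5, bi, ai] at hi 
        linear_combination (norm := module) hi)
    simp at e3
  have D' : ∀ i j : Fin 9, Function.Injective ![i, j, 0, 1, 2] →
      γ (z i) * δ (z j) - δ (z i) * γ (z j) ≠ 0 := by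
    intro i j hij h0
    have e1 := ind5 h i j 0 1 2 hij (δ (z j)) (-δ (z i))
      (-(δ (z j) * α (z i) - δ (z i) * α (z j)) - (δ (z j) * t (z i) - δ (z i) * t (z j)) * a 0)
      (-(δ (z j) * β (z i) - δ (z i) * β (z j)) - (δ (z j) * t (z i) - δ (z i) * t (z j)) * a 1)
      (-(δ (z j) * t (z i) - δ (z i) * t (z j)) * a 2) (by
        have hi := hd (z i)
        have hj := hd (z j)
        rw [hx] at hi hj
        have h00 : (γ (z i) * δ (z j) - δ (z i) * γ (z j)) • z 3 = 0 := by rw [h0, zero_smul]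
        linear_combination (norm := module) (δ (z j)) • hi - (δ (z i)) • hj + h00)
    have bj : δ (z j) = 0 := e1.1
    have bi : δ (z i) = 0 := by simpa using e1.2.1
    have e2 := ind5 h i j 0 1 2 hij (γ (z j)) (-γ (z i))
      (-(γ (z j) * α (z i) - γ (z i) * α (z j)) - (γ (z j) * t (z i) - γ (z i) * t (z j)) * a 0)
      (-(γ (z j) * β (z i) - γ (z i) * β (z j)) - (γ (z j) * t (z i) - γ (z i) * t (z j)) * a 1)
      (-(γ (z j) * t (z i) - γ (z i) * t (z j)) * a 2) (by
        have hi := hd (z i)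
        have hj := hd (z j)
        rw [hx, bi] at hi 
        rw [hx, bj] at hj
        linear_combination (norm := module) (γ (z j)) • hi - (γ (z i)) • hj)
    have ai : γ (z i) = 0 := by simpa using e2.2.1
    have e3 := ind5 h i j 0 1 2 hij 1 0 (-α (z i) - t (z i) * a 0) (-β (z i) - t (z i) * a 1) (-t (z i) * a 2) (by
        have hi := hd (z i)
        rw [hx, bi, ai] at hi 
        linear_combination (norm := module) hi)
    simp at e3
  refine ⟨x, α (z 6) • z 0 + β (z 6) • z 1 + γ (z 7) • z 3 + δ (z 7) • z 4, ?_, ?_⟩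
  · intro h0
    rw [h0] at hx
    have := ind5 h 0 1 2 3 4 (by decide) (a 0) (a 1) (a 2) 0 0 (by rw [hx]; module)
    exact ha0 this.1
  intro B hs hz hy hBx
  have hBx' : ∀ v, B v x = 0 := fun v => by rw [hs, hBx]
  have b01 : B (z 0) (z 1) = 0 := plane_zero B hs x _ _ hBx (hz 0) (hz 1) (-a 0) (-a 1) (a 2) (z 2)
    (hz 2) (by simpa) (by simpa) (by rw [hx]; module)
  have b34 : B (z 3) (z 4) = 0 := plane_zero B hs x _ _ hBx (hz 3) (hz 4) (a 3) (a 4) 1 (z 5)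
    (hz 5) (by simpa) (by simpa) (by rw [hx5]; module)
  have b10 : B (z 1) (z 0) = 0 := by rw [hs, b01]
  have b43 : B (z 4) (z 3) = 0 := by rw [hs, b34]
  have key : ∀ α β t γ δ α' β' t' γ' δ' : ℂ,
      B (α • z 0 + β • z 1 + t • x + γ • z 3 + δ • z 4) (α' • z 0 + β' • z 1 + t' • x + γ' • z 3 + δ' • z 4)
       = (α * γ' + γ * α') * B (z 0) (z 3) + (α * δ' + δ * α') * B (z 0) (z 4)
        + (β * γ' + γ * β') * B (z 1) (z 3) + (β * δ' + δ * β') * B (z 1) (z 4) := by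
    intros
    simp [hBx, hBx', hz, b01, b34, b10, b43, hs (z 3) (z 0), hs (z 3) (z 1), hs (z 4) (z 0), hs (z 4) (z 1)]
    ring
  have E : ∀ k, B (z k) (z k) = 2 * (γ (z k) * (α (z k) * B (z 0) (z 3) + β (z k) * B (z 1) (z 3))
      + δ (z k) * (α (z k) * B (z 0) (z 4) + β (z k) * B (z 1) (z 4))) := by
    intro k
    have := key (α (z k)) (β (z k)) (t (z k)) (γ (z k)) (δ (z k)) (α (z k)) (β (z k)) (t (z k)) (γ (z k)) (δ (z k))
    rw [← hd (z k)] at this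
    rw [this]; ring
  have E6 := E 6
  have E7 := E 7
  have E8 := E 8
  rw [hz] at E6 E7 E8
  have Ey := key (α (z 6)) (β (z 6)) 0 (γ (z 7)) (δ (z 7)) (α (z 6)) (β (z 6)) 0 (γ (z 7)) (δ (z 7))
  rw [zero_smul, add_zero, hy] at Ey
  have D67 := D 6 7 (by decide)
  have D68 := D 6 8 (by decide)
  have D67' := D' 6 7 (by decide)
  have D78' := D' 7 8 (by decide)
  generalize B (z 0) (z 3) = b03 at *
  generalize B (z 0) (z 4) = b04 at *
  generalize B (z 1) (z 3) = b13 at *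
  generalize B (z 1) (z 4) = b14 at *
  obtain ⟨u6, w6⟩ := lin2 (u := α (z 6) * b03 + β (z 6) * b13) (w := α (z 6) * b04 + β (z 6) * b14)
    (a := γ (z 6)) (b := δ (z 6)) (c := γ (z 7)) (d := δ (z 7))
    (by linear_combination (-1/2) * E6) (by linear_combination (-1/2) * Ey) D67'
  obtain ⟨u7, w7⟩ := lin2 (u := α (z 7) * b03 + β (z 7) * b13) (w := α (z 7) * b04 + β (z 7) * b14)
    (a := γ (z 7)) (b := δ (z 7)) (c := γ (z 8)) (d := δ (z 8))
    (by linear_combination (-1/2) * E7) (by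
      apply (mul_eq_zero.1 (?_ : (α (z 6) * β (z 8) - β (z 6) * α (z 8)) * _ = 0)).resolve_left D68
      linear_combination (-1/2) * (α (z 6) * β (z 7) - β (z 6) * α (z 7)) * E8 
        - (α (z 8) * β (z 7) - β (z 8) * α (z 7)) * (γ (z 8) * u6 + δ (z 8) * w6)) D78'
  obtain ⟨h03, h13⟩ := lin2 u6 u7 D67
  obtain ⟨h04, h14⟩ := lin2 w6 w7 D67
  intro u v
  rw [hd u, hd v, key, h03, h04, h13, h14]
  ring


lemma openness {ι κ : Type} [Fintype ι] [DecidableEq ι] [Fintype κ] [DecidableEq κ]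
    (M : Matrix κ ι (MvPolynomial (Fin 5) ℂ)) (hM : ∀ k i, (M k i).IsHomogeneous 1) (x0 : V5)
    (hx0 : ∀ c : ι → ℂ, (M.map (eval x0)).mulVec c = 0 → c = 0) :
    ∃ F : MvPolynomial (Fin 5) ℂ, F ≠ 0 ∧ (∃ n, F.IsHomogeneous n) ∧
      ∀ x : V5, eval x F ≠ 0 → ∀ c : ι → ℂ, (M.map (eval x)).mulVec c = 0 → c = 0 := by
  have hinj : Function.Injective (M.map (eval x0)).mulVec := by
    have := (injective_iff_map_eq_zero (M.map (eval x0)).mulVecLin).2 hx0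
    exact this
  obtain ⟨g, hg⟩ := LinearMap.exists_leftInverse_of_injective (M.map (eval x0)).mulVecLin
    (LinearMap.ker_eq_bot.2 hinj)
  obtain ⟨N, hN⟩ : ∃ N : Matrix ι κ ℂ, N * M.map (eval x0) = 1 := by
    refine ⟨LinearMap.toMatrix' g, ?_⟩
    have := congrArg LinearMap.toMatrix' hg
    rwa [LinearMap.toMatrix'_comp, LinearMap.toMatrix'_id, ← Matrix.toLin'_apply',
      LinearMap.toMatrix'_toLin'] at this
  let G : Matrix ι ι (MvPolynomial (Fin 5) ℂ) := fun i j => ∑ k, C (N i k) * M k j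
  have hG : ∀ x, G.map (eval x) = N * M.map (eval x) := by
    intro x
    ext i j
    change eval x (∑ k, C (N i k) * M k j) = _
    simp [Matrix.mul_apply]
  have hdet : ∀ x, eval x G.det = (N * M.map (eval x)).det := by
    intro x
    rw [← hG, RingHom.map_det]; rfl
  refine ⟨G.det, ?_, ⟨Fintype.card ι, ?_⟩, ?_⟩
  · intro h
    have := hdet x0
    rw [hN, h] at this
    simp at this
  · rw [Matrix.det_apply']
    apply IsHomogeneous.sum
    intro σ _
    have h1 : (∏ i, G (σ i) i).IsHomogeneous (∑ _i : ι, 1) := by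
      apply IsHomogeneous.prod
      intro i _
      refine IsHomogeneous.sum _ _ _ ?_
      intro k _
      simpa using (isHomogeneous_C (Fin 5) (N (σ i) k)).mul (hM k i)
    have h2 : ((Equiv.Perm.sign σ : ℤ) : MvPolynomial (Fin 5) ℂ).IsHomogeneous 0 := by
      have := isHomogeneous_C (Fin 5) ((Equiv.Perm.sign σ : ℤ) : ℂ)
      simpa using this
    simpa using h2.mul h1
  · intro x hx c hc
    rw [hdet] at hx
    apply Matrix.eq_zero_of_mulVec_eq_zero hx
    rw [← Matrix.mulVec_mulVec, hc, Matrix.mulVec_zero]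



lemma pderiv_comm' (i j : Fin 5) (f : MvPolynomial (Fin 5) ℂ) :
    pderiv i (pderiv j f) = pderiv j (pderiv i f) := by
  have : ⁅(pderiv i : Derivation ℂ (MvPolynomial (Fin 5) ℂ) (MvPolynomial (Fin 5) ℂ)), (pderiv j : Derivation ℂ (MvPolynomial (Fin 5) ℂ) (MvPolynomial (Fin 5) ℂ))⁆ = 0 := by
    apply derivation_ext
    intro k
    simp [Derivation.commutator_apply, pderiv_X, Pi.single_apply, apply_ite]
  have h := congrArg (fun D => D f) this
  simpa [Derivation.commutator_apply, sub_eq_zero] using h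

/-- The (constant) Hessian of a quadric. -/
def hess (f : MvPolynomial (Fin 5) ℂ) : Fin 5 × Fin 5 → ℂ :=
  fun p => eval 0 (pderiv p.1 (pderiv p.2 f))

lemma hess_symm (f : MvPolynomial (Fin 5) ℂ) (i j) : hess f (i, j) = hess f (j, i) := by
  simp only [hess, pderiv_comm' i j]

lemma pderiv_hess {f : MvPolynomial (Fin 5) ℂ} (hf : f.IsHomogeneous 2) (j : Fin 5) :
    pderiv j f = ∑ i, C (hess f (i, j)) * X i := by
  have h1 : (pderiv j f).IsHomogeneous 1 := hf.pderiv
  have := h1.sum_X_mul_pderiv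
  rw [one_smul] at this
  rw [← this]
  refine Finset.sum_congr rfl fun i _ => ?_
  have h0 : (pderiv i (pderiv j f)).IsHomogeneous 0 := h1.pderiv
  have h : (pderiv i (pderiv j f)).totalDegree = 0 := Nat.le_zero.1 h0.totalDegree_le
  rw [totalDegree_eq_zero_iff_eq_C] at h
  have h2 : hess f (i, j) = coeff 0 (pderiv i (pderiv j f)) := by
    rw [hess]; simp only; rw [h]; simp
  rw [h2, ← h, mul_comm]

lemma two_mul_hess {f : MvPolynomial (Fin 5) ℂ} (hf : f.IsHomogeneous 2) :
    2 * f = ∑ j, ∑ i, C (hess f (i, j)) * X i * X j := by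
  have := hf.sum_X_mul_pderiv
  rw [nsmul_eq_mul] at this
  push_cast at this
  rw [← this]
  refine Finset.sum_congr rfl fun j _ => ?_
  rw [pderiv_hess hf, Finset.mul_sum]
  refine Finset.sum_congr rfl fun i _ => by ring

lemma eq_zero_of_hess {f : MvPolynomial (Fin 5) ℂ} (hf : f.IsHomogeneous 2) (h : hess f = 0) : f = 0 := by
  have := two_mul_hess hf
  simpa [h] using this

lemma eval_hess {f : MvPolynomial (Fin 5) ℂ} (hf : f.IsHomogeneous 2) (w : V5) :
    2 * eval w f = ∑ p : Fin 5 × Fin 5, w p.1 * w p.2 * hess f p := by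
  have := congrArg (eval w) (two_mul_hess hf)
  simp only [map_mul, map_sum, eval_C, eval_X, map_ofNat] at this
  rw [this, Fintype.sum_prod_type, Finset.sum_comm]
  exact Finset.sum_congr rfl fun i _ => Finset.sum_congr rfl fun j _ => by ring

/-- The matrix of conditions on the Hessian: symmetry, vanishing at the points `w k`
(multiplied by `X m` to make all entries of degree one), and being singular at `x`. -/
def condMat {κ : Type} (w : κ → V5) (m : Fin 5) :
    Matrix ((Fin 5 × Fin 5) ⊕ κ ⊕ Fin 5) (Fin 5 × Fin 5) (MvPolynomial (Fin 5) ℂ) :=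
  fun r p => match r with
    | Sum.inl s => C ((if p = s then 1 else 0) - (if p = s.swap then 1 else 0)) * X m
    | Sum.inr (Sum.inl k) => C (w k p.1 * w k p.2) * X m
    | Sum.inr (Sum.inr j) => C (if p.2 = j then 1 else 0) * X p.1

lemma condMat_hom {κ : Type} (w : κ → V5) (m : Fin 5) (r p) : (condMat w m r p).IsHomogeneous 1 := by
  rcases r with s | k | j <;> exact (isHomogeneous_C _ _).mul (isHomogeneous_X _ _)

lemma condMat_mulVec {κ : Type} [Fintype κ] (w : κ → V5) (m : Fin 5) (x : V5) (c : Fin 5 × Fin 5 → ℂ) :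
    ((condMat w m).map (eval x)).mulVec c = 0 ↔
      (∀ i j, x m * (c (i, j) - c (j, i)) = 0) ∧
      (∀ k, x m * ∑ p : Fin 5 × Fin 5, w k p.1 * w k p.2 * c p = 0) ∧
      (∀ j, ∑ i, x i * c (i, j) = 0) := by
  have h1 : ∀ s, ((condMat w m).map (eval x)).mulVec c (Sum.inl s) = x m * (c s - c s.swap) := by
    intro s
    simp only [Matrix.mulVec, dotProduct, Matrix.map_apply, condMat, map_mul, eval_C, eval_X, sub_mul,
      Finset.sum_sub_distrib, ite_mul, one_mul, zero_mul, Finset.sum_ite_eq', Finset.mem_univ, if_true, mul_sub]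
  have h2 : ∀ k, ((condMat w m).map (eval x)).mulVec c (Sum.inr (Sum.inl k)) =
      x m * ∑ p : Fin 5 × Fin 5, w k p.1 * w k p.2 * c p := by
    intro k
    simp only [Matrix.mulVec, dotProduct, Matrix.map_apply, condMat, map_mul, eval_C, eval_X]
    rw [Finset.mul_sum]
    exact Finset.sum_congr rfl fun p _ => by ring
  have h3 : ∀ j, ((condMat w m).map (eval x)).mulVec c (Sum.inr (Sum.inr j)) = ∑ i, x i * c (i, j) := by
    intro j
    simp only [Matrix.mulVec, dotProduct, Matrix.map_apply, condMat, map_mul, eval_C, eval_X]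
    rw [Fintype.sum_prod_type]
    refine Finset.sum_congr rfl fun i _ => ?_
    simp
  constructor
  · intro h
    refine ⟨fun i j => ?_, fun k => ?_, fun j => ?_⟩
    · have := h1 (i, j); rw [h] at this; exact this.symm
    · have := h2 k; rw [h] at this; exact this.symm
    · have := h3 j; rw [h] at this; exact this.symm
  · rintro ⟨g1, g2, g3⟩
    funext r
    rcases r with s | k | j
    · rw [h1]; exact g1 s.1 s.2
    · rw [h2]; exact g2 k
    · rw [h3]; exact g3 j

lemma exists_F (z : Fin 9 → V5)
    (h : ∀ f : Fin 5 → Fin 9, Function.Injective f → LinearIndependent ℂ (z ∘ f)) :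
    ∃ (F : MvPolynomial (Fin 5) ℂ) (y : V5), F ≠ 0 ∧ (∃ n, F.IsHomogeneous n) ∧
      ∀ x : V5, eval x F ≠ 0 → ∀ f : MvPolynomial (Fin 5) ℂ, f.IsHomogeneous 2 →
        (∀ k, eval (z k) f = 0) → eval y f = 0 → (∀ j, eval x (pderiv j f) = 0) → f = 0 := by
  obtain ⟨x0, y, hx0, hB⟩ := core z h
  obtain ⟨m, hm⟩ : ∃ m, x0 m ≠ 0 := by
    by_contra! hh
    exact hx0 (funext hh)
  let w : Option (Fin 9) → V5 := fun o => o.elim y z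
  obtain ⟨F, hF0, hFh, hF⟩ := openness (condMat w m) (condMat_hom w m) x0 (by
    intro c hc
    rw [condMat_mulVec] at hc
    obtain ⟨g1, g2, g3⟩ := hc
    have sy : ∀ i j, c (i, j) = c (j, i) := fun i j =>
      sub_eq_zero.1 ((mul_eq_zero.1 (g1 i j)).resolve_left hm)
    let A : Matrix (Fin 5) (Fin 5) ℂ := fun i j => c (i, j)
    have hA : ∀ u v : V5, Matrix.toBilin' A u v = ∑ i, ∑ j, u i * c (i, j) * v j := by
      intro u v
      rw [Matrix.toBilin'_apply]
    have hdiag : ∀ u : V5, Matrix.toBilin' A u u = ∑ p : Fin 5 × Fin 5, u p.1 * u p.2 * c p := by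
      intro u
      rw [hA, Fintype.sum_prod_type]
      exact Finset.sum_congr rfl fun i _ => Finset.sum_congr rfl fun j _ => by ring
    have hall := hB (Matrix.toBilin' A) (by
        intro u v
        rw [hA, hA, Finset.sum_comm]
        exact Finset.sum_congr rfl fun i _ => Finset.sum_congr rfl fun j _ => by rw [sy]; ring)
      (fun k => by rw [hdiag]; exact (mul_eq_zero.1 (g2 (some k))).resolve_left hm)
      (by rw [hdiag]; exact (mul_eq_zero.1 (g2 none)).resolve_left hm)
      (by
        intro v
        rw [hA, Finset.sum_comm]
        refine Finset.sum_eq_zero fun j _ => ?_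
        rw [← Finset.sum_mul, g3, zero_mul])
    funext ⟨i, j⟩
    have := hall (Pi.single i 1) (Pi.single j 1)
    rw [Matrix.toBilin'_single] at this
    exact this)
  refine ⟨F, y, hF0, hFh, fun x hx f hf hz hy hs => eq_zero_of_hess hf (hF x hx _ ?_)⟩
  rw [condMat_mulVec]
  refine ⟨fun i j => by rw [hess_symm]; ring, fun k => ?_, fun j => ?_⟩
  · rw [← eval_hess hf]
    rcases k with _ | k
    · simp [w, hy]
    · simp [w, hz]
  · have := hs j
    rw [pderiv_hess hf] at this
    simp only [map_mul, map_sum, eval_C, eval_X] at this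
    rw [← this]
    exact Finset.sum_congr rfl fun i _ => by ring

end Helpers

/-- Let `Z` be a set of `q ≥ 9` points in linear general position in ℙ⁴.  Then for a
general point `P` of ℙ⁴ (i.e. all `P` in a nonempty Zariski-open set), the image of `Z`
under the projection from `P` to a hyperplane ℙ³ is not contained in two linearly
independent quadric surfaces; equivalently there do not exist two linearly independent
quadric cones with vertex `P` containing `Z`. -/
theorem stmt_7 (q : ℕ) (hq : 9 ≤ q) (P : Fin q → P4)
    (hinj : Function.Injective P) (hLGP : LGP P) :
    ∃ F : MvPolynomial (Fin 5) ℂ, F ≠ 0 ∧ (∃ n, F.IsHomogeneous n) ∧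
      ∀ x : P4, MvPolynomial.eval x.rep F ≠ 0 →
        ¬ ∃ q₁ q₂ : MvPolynomial (Fin 5) ℂ,
            LinearIndependent ℂ ![q₁, q₂] ∧
            q₁.IsHomogeneous 2 ∧ q₂.IsHomogeneous 2 ∧
            VanishesOnPts q₁ P ∧ VanishesOnPts q₂ P ∧
            ConeWithVertex q₁ x.rep ∧ ConeWithVertex q₂ x.rep := by
  obtain ⟨F, y, hF0, hFh, hF⟩ := exists_F (fun k => (P (Fin.castLE hq k)).rep) (by
    intro f hf
    have hg : Function.Injective (fun i => Fin.castLE hq (f i)) :=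
      (Fin.castLE_injective hq).comp hf
    have h := hLGP (Finset.univ.image fun i => Fin.castLE hq (f i))
      (Finset.card_image_le.trans (by simp))
    exact h.comp (fun i => ⟨Fin.castLE hq (f i), Finset.mem_image_of_mem _ (Finset.mem_univ i)⟩)
      (fun i j hij => hg (congrArg Subtype.val hij)))
  refine ⟨F, hF0, hFh, ?_⟩
  rintro x hx ⟨q₁, q₂, hli, h1, h2, v1, v2, c1, c2⟩
  rw [LinearIndependent.pair_iff] at hli
  have hcomb : ∀ a b : ℂ, a * MvPolynomial.eval y q₁ + b * MvPolynomial.eval y q₂ = 0 →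
      a = 0 ∧ b = 0 := by
    intro a b hab
    apply hli
    apply hF x.rep hx
    · rw [MvPolynomial.smul_eq_C_mul, MvPolynomial.smul_eq_C_mul]
      have e1 := (MvPolynomial.isHomogeneous_C (Fin 5) a).mul h1
      have e2 := (MvPolynomial.isHomogeneous_C (Fin 5) b).mul h2
      rw [zero_add] at e1 e2
      exact e1.add e2
    · intro k
      simp [v1 (Fin.castLE hq k), v2 (Fin.castLE hq k)]
    · simpa using hab
    · intro j
      simp [c1.2 j, c2.2 j]
  have e := hcomb (MvPolynomial.eval y q₂) (-MvPolynomial.eval y q₁) (by ring)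
  have e' := hcomb 1 0 (by rw [neg_eq_zero.1 e.2]; ring)
  exact one_ne_zero e'.1
end
end

section
/- Let Z = {P₁, …, P₇} be a nondegenerate set of 7 points in ℙ⁴ (i.e., Z spans ℙ⁴). Then the image of Z under projection from a general point of ℙ⁴ to a hyperplane is not contained in any twisted cubic curve in ℙ³. -/
noncomputable section

/-- The underlying vector space of ℙ³ over ℂ. -/
abbrev V4 : Type := Fin 4 → ℂ

/-- The (nonzero) vector `w ∈ ℂ⁴` represents a point of a twisted cubic in ℙ³: there is
a projective linear change of coordinates `A` carrying the standard twisted cubic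
`(s³ : s²t : st² : t³)` to a curve through `w`. -/
def OnTwistedCubic (A : V4 ≃ₗ[ℂ] V4) (w : V4) : Prop :=
  ∃ s t c : ℂ, (s ≠ 0 ∨ t ≠ 0) ∧ c ≠ 0 ∧
    w = c • (A ![s ^ 3, s ^ 2 * t, s * t ^ 2, t ^ 3])

/-- product of three binary linear forms with coefficients `P Q`, at `(s,t)` -/
def cub (P Q : Fin 3 → ℂ) (s t : ℂ) : ℂ :=
  (P 0 * s + Q 0 * t) * (P 1 * s + Q 1 * t) * (P 2 * s + Q 2 * t)

theorem cub_functional (P Q : Fin 3 → ℂ) : ∃ φ : V4 →ₗ[ℂ] ℂ, ∀ s t : ℂ,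
    φ ![s ^ 3, s ^ 2 * t, s * t ^ 2, t ^ 3] = cub P Q s t := by
  refine ⟨(P 0 * P 1 * P 2) • LinearMap.proj 0 +
    (Q 0 * P 1 * P 2 + P 0 * Q 1 * P 2 + P 0 * P 1 * Q 2) • LinearMap.proj 1 +
    (P 0 * Q 1 * Q 2 + Q 0 * P 1 * Q 2 + Q 0 * Q 1 * P 2) • LinearMap.proj 2 +
    (Q 0 * Q 1 * Q 2) • LinearMap.proj 3, ?_⟩
  intro s t
  simp [cub]
  ring

theorem lin_of_rel (x a c s t : Fin 5 → ℂ) (c' s' t' : ℂ)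
    (hx0 : ∀ i, x i ≠ 0) (hc : ∀ i, c i ≠ 0)
    (hD : ∀ i j, i ≠ j → s i * t j - s j * t i ≠ 0)
    (hx : ∀ P Q, ∑ i, x i * c i * cub P Q (s i) (t i) = 0)
    (ha : ∀ P Q, ∑ i, a i * c i * cub P Q (s i) (t i) = c' * cub P Q s' t') :
    ∃ q r : ℂ, ∀ i, a i * (s i * t' - s' * t i) = x i * (q * s i + r * t i) := by
  have h01 := hD 0 1 (by decide)
  obtain ⟨q, r, h0, h1⟩ : ∃ q r : ℂ, a 0 * (s 0 * t' - s' * t 0) = x 0 * (q * s 0 + r * t 0) ∧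
      a 1 * (s 1 * t' - s' * t 1) = x 1 * (q * s 1 + r * t 1) := by
    have h0 := hx0 0
    have h1 := hx0 1
    obtain ⟨y0, hy0⟩ : ∃ y, a 0 * (s 0 * t' - s' * t 0) = x 0 * y :=
      ⟨_, (mul_div_cancel₀ _ h0).symm⟩
    obtain ⟨y1, hy1⟩ : ∃ y, a 1 * (s 1 * t' - s' * t 1) = x 1 * y :=
      ⟨_, (mul_div_cancel₀ _ h1).symm⟩
    refine ⟨(y0 * t 1 - y1 * t 0) / (s 0 * t 1 - s 1 * t 0),
      (y1 * s 0 - y0 * s 1) / (s 0 * t 1 - s 1 * t 0), ?_, ?_⟩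
    · rw [hy0]
      congr 1
      rw [div_mul_eq_mul_div, div_mul_eq_mul_div, ← add_div, eq_div_iff h01]
      ring
    · rw [hy1]
      congr 1
      rw [div_mul_eq_mul_div, div_mul_eq_mul_div, ← add_div, eq_div_iff h01]
      ring
  refine ⟨q, r, ?_⟩
  have key : ∀ j k, ∑ i, c i * (a i * (s i * t' - s' * t i) - x i * (q * s i + r * t i)) *
      ((s i * t j - s j * t i) * (s i * t k - s k * t i)) = 0 := by
    intro j k
    have e1 := hx ![q, t j, t k] ![r, -s j, -s k]
    have e2 := ha ![t', t j, t k] ![-s', -s j, -s k]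
    have : c' * cub ![t', t j, t k] ![-s', -s j, -s k] s' t' = 0 := by
      simp [cub]; right; left; left; ring
    rw [this] at e2
    rw [← sub_zero (0 : ℂ)]
    nth_rewrite 1 [← e2]
    rw [← e1, ← Finset.sum_sub_distrib]
    refine Finset.sum_congr rfl fun i _ => ?_
    simp [cub]
    ring
  have fin : ∀ i j k : Fin 5, i ≠ j → i ≠ k →
      c i * (a i * (s i * t' - s' * t i) - x i * (q * s i + r * t i)) *
      ((s i * t j - s j * t i) * (s i * t k - s k * t i)) = 0 →
      a i * (s i * t' - s' * t i) = x i * (q * s i + r * t i) := by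
    intro i j k hj hk h
    have := hc i
    have := hD i j hj
    have := hD i k hk
    simp only [mul_eq_zero] at h
    have h' : a i * (s i * t' - s' * t i) - x i * (q * s i + r * t i) = 0 := by tauto
    exact sub_eq_zero.mp h'
  intro i
  fin_cases i
  · exact h0
  · exact h1
  · refine fin 2 3 4 (by decide) (by decide) ?_
    have := key 3 4
    simpa [Fin.sum_univ_five, h0, h1] using this
  · refine fin 3 2 4 (by decide) (by decide) ?_
    have := key 2 4
    simpa [Fin.sum_univ_five, h0, h1] using this
  · refine fin 4 2 3 (by decide) (by decide) ?_
    have := key 2 3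
    simpa [Fin.sum_univ_five, h0, h1] using this

theorem bilin_of_rel (x a b c s t : Fin 5 → ℂ) (c' s' t' c'' s'' t'' : ℂ)
    (hx0 : ∀ i, x i ≠ 0) (hc : ∀ i, c i ≠ 0)
    (hD : ∀ i j, i ≠ j → s i * t j - s j * t i ≠ 0)
    (hD' : s' * t'' - s'' * t' ≠ 0)
    (hst : ∀ i, s i ≠ 0 ∨ t i ≠ 0)
    (hx : ∀ P Q, ∑ i, x i * c i * cub P Q (s i) (t i) = 0)
    (ha : ∀ P Q, ∑ i, a i * c i * cub P Q (s i) (t i) = c' * cub P Q s' t')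
    (hb : ∀ P Q, ∑ i, b i * c i * cub P Q (s i) (t i) = c'' * cub P Q s'' t'') :
    ∃ α β γ δ : ℂ, α ≠ 0 ∧
      ∀ i, a i * b i * α + a i * x i * β + b i * x i * γ + x i ^ 2 * δ = 0 := by
  obtain ⟨q0, q1, hq⟩ := lin_of_rel x a c s t c' s' t' hx0 hc hD hx ha
  obtain ⟨r0, r1, hr⟩ := lin_of_rel x b c s t c'' s'' t'' hx0 hc hD hx hb
  refine ⟨s' * t'' - s'' * t', -t' * r1 - s' * r0, q0 * s'' + q1 * t'', q0 * r1 - q1 * r0, hD', ?_⟩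
  intro i
  have e1 := hq i
  have e2 := hr i
  rcases hst i with h | h
  · apply mul_left_cancel₀ h
    linear_combination (-b i * s'' - x i * r1) * e1 + (a i * s' + x i * q1) * e2
  · apply mul_left_cancel₀ h
    linear_combination (-(b i * t'' - x i * r0)) * e1 + (a i * t' - x i * q0) * e2

/-- linear form as polynomial -/
def toPoly (f : V5 →ₗ[ℂ] ℂ) : MvPolynomial (Fin 5) ℂ :=
  ∑ k, MvPolynomial.C (f (Pi.single k 1)) * MvPolynomial.X k

theorem eval_toPoly (f : V5 →ₗ[ℂ] ℂ) (x : V5) : MvPolynomial.eval x (toPoly f) = f x := by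
  simp only [toPoly, map_sum, map_mul, MvPolynomial.eval_C, MvPolynomial.eval_X]
  conv_rhs => rw [LinearMap.pi_apply_eq_sum_univ f x]
  refine Finset.sum_congr rfl fun k _ => ?_
  rw [smul_eq_mul, mul_comm]
  congr 2
  ext j
  simp [Pi.single_apply, eq_comm]

theorem toPoly_hom (f : V5 →ₗ[ℂ] ℂ) : (toPoly f).IsHomogeneous 1 := by
  refine MvPolynomial.IsHomogeneous.sum _ _ _ fun k _ => ?_
  simpa using (MvPolynomial.isHomogeneous_C (Fin 5) (f (Pi.single k 1))).mul
    (MvPolynomial.isHomogeneous_X ℂ k)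

theorem exists_line_form (u w : V5) : ∃ l : MvPolynomial (Fin 5) ℂ, l ≠ 0 ∧ l.IsHomogeneous 1 ∧
    ∀ α β : ℂ, MvPolynomial.eval (α • u + β • w) l = 0 := by
  have hlt : Submodule.span ℂ ({u, w} : Set V5) < ⊤ := by
    rw [lt_top_iff_ne_top]
    intro h
    have h1 : Module.finrank ℂ (Submodule.span ℂ ({u, w} : Set V5)) ≤ 2 := by
      have := finrank_span_finset_le_card (R := ℂ) ({u, w} : Finset V5)
      simp only [Finset.coe_insert, Finset.coe_singleton] at this
      exact this.trans Finset.card_le_two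
    rw [h, finrank_top] at h1
    simp at h1
  obtain ⟨f, hf, hle⟩ := Submodule.exists_le_ker_of_lt_top _ hlt
  refine ⟨toPoly f, ?_, toPoly_hom f, ?_⟩
  · intro h
    apply hf
    refine LinearMap.ext fun x => ?_
    rw [← eval_toPoly, h]
    simp
  · intro α β
    rw [eval_toPoly]
    apply LinearMap.mem_ker.mp
    apply hle
    exact Submodule.mem_span_pair.mpr ⟨α, β, rfl⟩

/-- a nonzero homogeneous form vanishing on all lines joining two of the points -/
theorem exists_F0 (p : Fin 7 → V5) : ∃ F : MvPolynomial (Fin 5) ℂ, F ≠ 0 ∧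
    (∃ n, F.IsHomogeneous n) ∧ ∀ i j, ∀ α β : ℂ, MvPolynomial.eval (α • p i + β • p j) F = 0 := by
  choose l h1 h2 h3 using fun ij : Fin 7 × Fin 7 => exists_line_form (p ij.1) (p ij.2)
  refine ⟨∏ ij, l ij, Finset.prod_ne_zero_iff.mpr fun ij _ => h1 ij,
    ⟨_, MvPolynomial.IsHomogeneous.prod _ _ _ fun ij _ => h2 ij⟩, ?_⟩
  intro i j α β
  rw [map_prod]
  exact Finset.prod_eq_zero (Finset.mem_univ (i, j)) (h3 (i, j) α β)

/-- Weddle matrix -/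
def wmat {R : Type*} [CommRing R] (a b x : Fin 5 → R) : Matrix (Fin 4) (Fin 4) R :=
  Matrix.of fun r => ![a r.castSucc * b r.castSucc, a r.castSucc * x r.castSucc,
    b r.castSucc * x r.castSucc, x r.castSucc ^ 2]

theorem wdet_ne (a b : Fin 5 → ℂ) (h0 : a 0 * b 0 ≠ 0) (h12 : a 1 * b 2 - a 2 * b 1 ≠ 0) :
    ∃ x : Fin 5 → ℂ, (wmat a b x).det ≠ 0 := by
  obtain ⟨T, hT, hT'⟩ : ∃ T : ℂ, T ≠ 0 ∧
      T ≠ (a 2 * b 3 - a 3 * b 2) - (a 1 * b 3 - a 3 * b 1) := by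
    by_cases h : (1 : ℂ) = (a 2 * b 3 - a 3 * b 2) - (a 1 * b 3 - a 3 * b 1)
    · exact ⟨2, by norm_num, by rw [← h]; norm_num⟩
    · exact ⟨1, by norm_num, h⟩
  set y := (T - ((a 2 * b 3 - a 3 * b 2) - (a 1 * b 3 - a 3 * b 1))) / (a 1 * b 2 - a 2 * b 1)
    with hy
  have hy0 : y ≠ 0 := div_ne_zero (sub_ne_zero.mpr hT') h12
  have hyT : y * (a 1 * b 2 - a 2 * b 1) =
    T - ((a 2 * b 3 - a 3 * b 2) - (a 1 * b 3 - a 3 * b 1)) := div_mul_cancel₀ _ h12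
  refine ⟨![0, 1, 1, y, 0], ?_⟩
  have : (wmat a b ![0, 1, 1, y, 0]).det = (a 0 * b 0) * y * T := by
    have e0 : (Fin.castSucc 0 : Fin 5) = 0 := rfl
    have e1 : (Fin.castSucc 1 : Fin 5) = 1 := rfl
    have e2 : (Fin.castSucc 2 : Fin 5) = 2 := rfl
    have e3 : (Fin.castSucc 3 : Fin 5) = 3 := rfl
    simp [wmat, Matrix.det_succ_row_zero, Fin.sum_univ_succ, Fin.succAbove]
    linear_combination (a 0 * b 0 * y) * hyT
  rw [this]
  exact mul_ne_zero (mul_ne_zero h0 hy0) hT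

theorem wdet_hom (a b : Fin 5 → ℂ) (l : Fin 5 → MvPolynomial (Fin 5) ℂ)
    (hl : ∀ i, (l i).IsHomogeneous 1) :
    ∃ n, (wmat (fun i => MvPolynomial.C (a i)) (fun i => MvPolynomial.C (b i)) l).det.IsHomogeneous
      n := by
  refine ⟨∑ i : Fin 4, (![0, 1, 1, 2] : Fin 4 → ℕ) i, ?_⟩
  rw [Matrix.det_apply]
  refine MvPolynomial.IsHomogeneous.sum _ _ _ fun σ _ => ?_
  have : (∏ i, wmat (fun i => MvPolynomial.C (a i)) (fun i => MvPolynomial.C (b i)) l (σ i) i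
      ).IsHomogeneous (∑ i : Fin 4, (![0, 1, 1, 2] : Fin 4 → ℕ) i) := by
    refine MvPolynomial.IsHomogeneous.prod _ _ _ fun i _ => ?_
    generalize (σ i) = r
    have hC := fun z => MvPolynomial.isHomogeneous_C (Fin 5) (R := ℂ) z
    fin_cases i
    · simpa [wmat] using (hC (a r.castSucc)).mul (hC (b r.castSucc))
    · simpa [wmat] using (hC (a r.castSucc)).mul (hl r.castSucc)
    · simpa [wmat] using (hC (b r.castSucc)).mul (hl r.castSucc)
    · simpa [wmat] using (hl r.castSucc).pow 2
  rcases Int.units_eq_one_or (Equiv.Perm.sign σ) with h | h <;> rw [h]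
  · simpa using this
  · simpa using this.neg

theorem wdet_eval (a b : Fin 5 → ℂ) (l : Fin 5 → MvPolynomial (Fin 5) ℂ) (x : V5) :
    MvPolynomial.eval x
      (wmat (fun i => MvPolynomial.C (a i)) (fun i => MvPolynomial.C (b i)) l).det =
    (wmat a b fun i => MvPolynomial.eval x (l i)).det := by
  rw [RingHom.map_det]
  congr 1
  ext r k
  fin_cases k <;> simp [wmat]

theorem wdet_zero (a b x : Fin 5 → ℂ) (h : ∃ α β γ δ : ℂ, α ≠ 0 ∧
      ∀ i, a i * b i * α + a i * x i * β + b i * x i * γ + x i ^ 2 * δ = 0) :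
    (wmat a b x).det = 0 := by
  obtain ⟨α, β, γ, δ, h0, h⟩ := h
  apply Matrix.exists_mulVec_eq_zero_iff.mp
  refine ⟨![α, β, γ, δ], fun h' => h0 (congrFun h' 0), ?_⟩
  ext r
  simpa [Matrix.mulVec, dotProduct, wmat, Fin.sum_univ_four] using h r.castSucc

/-- Consequences of lying on a twisted cubic. -/
theorem cubic_data (p : Fin 7 → V5) (hp : ∀ i j, i ≠ j → ∀ κ : ℂ, p i ≠ κ • p j)
    (x : V5) (L : V5 →ₗ[ℂ] V4) (hker : LinearMap.ker L = Submodule.span ℂ {x})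
    (hx : ∀ i j, ∀ α β : ℂ, x ≠ α • p i + β • p j)
    (A : V4 ≃ₗ[ℂ] V4) (hA : ∀ i, OnTwistedCubic A (L (p i))) :
    ∃ s t c : Fin 7 → ℂ, (∀ i, s i ≠ 0 ∨ t i ≠ 0) ∧ (∀ i, c i ≠ 0) ∧
      (∀ i j, i ≠ j → s i * t j - s j * t i ≠ 0) ∧
      ∀ P Q, ∃ φ : V5 →ₗ[ℂ] ℂ, φ x = 0 ∧ ∀ i, φ (p i) = c i * cub P Q (s i) (t i) := by
  choose s t c hst hc h using hA
  refine ⟨s, t, c, hst, hc, ?_, ?_⟩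
  · intro i j hij hD
    obtain ⟨ρ, hs, ht⟩ : ∃ ρ : ℂ, s i = ρ * s j ∧ t i = ρ * t j := by
      rcases hst j with hj | hj
      · refine ⟨s i / s j, by field_simp, ?_⟩
        field_simp
        linear_combination -hD
      · refine ⟨t i / t j, ?_, by field_simp⟩
        field_simp
        linear_combination hD
    have hLi : L (p i) = (c i * ρ ^ 3 / c j) • L (p j) := by
      rw [h i, h j, smul_smul, div_mul_cancel₀ _ (hc j), hs, ht, mul_smul, ← map_smul A (ρ ^ 3)]
      congr 2
      ext k
      fin_cases k <;> simp <;> ring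
    have hmem : p i - (c i * ρ ^ 3 / c j) • p j ∈ LinearMap.ker L := by
      rw [LinearMap.mem_ker, map_sub, map_smul, hLi, sub_self]
    rw [hker, Submodule.mem_span_singleton] at hmem
    obtain ⟨μ, hμ⟩ := hmem
    have hμ0 : μ ≠ 0 := by
      rintro rfl
      rw [zero_smul] at hμ
      exact hp i j hij _ (sub_eq_zero.mp hμ.symm)
    apply hx i j μ⁻¹ (-(μ⁻¹ * (c i * ρ ^ 3 / c j)))
    rw [neg_smul, mul_smul, ← sub_eq_add_neg, ← smul_sub, ← hμ, smul_smul, inv_mul_cancel₀ hμ0,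
      one_smul]
  · intro P Q
    obtain ⟨φ, hφ⟩ := cub_functional P Q
    refine ⟨φ ∘ₗ A.symm.toLinearMap ∘ₗ L, ?_, ?_⟩
    · have : x ∈ LinearMap.ker L := by rw [hker]; exact Submodule.mem_span_singleton_self x
      simp [LinearMap.mem_ker.mp this]
    · intro i
      rw [LinearMap.comp_apply, LinearMap.comp_apply, h i, map_smul, map_smul]
      simp only [LinearEquiv.coe_coe, LinearEquiv.symm_apply_apply]
      rw [hφ, smul_eq_mul]

theorem exists_perm3 : ∀ l i j : Fin 5, l ≠ i → l ≠ j → i ≠ j →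
    ∃ τ : Equiv.Perm (Fin 5), τ 0 = l ∧ τ 1 = i ∧ τ 2 = j := by
  intro l i j h1 h2 h3
  have hf : Function.Injective (![l, i, j] : Fin 3 → Fin 5) := by
    intro a b hab
    fin_cases a <;> fin_cases b <;> simp_all [eq_comm]
  have hg : Function.Injective (![0, 1, 2] : Fin 3 → Fin 5) := by decide
  obtain ⟨τ, hτ⟩ := Equiv.Perm.exists_extending_pair _ _ hg hf
  exact ⟨τ, hτ 0, hτ 1, hτ 2⟩

theorem exists_basis (p : Fin 7 → V5) (h : Submodule.span ℂ (Set.range p) = ⊤) :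
    ∃ (σ : Fin 5 → Fin 7) (B : Module.Basis (Fin 5) ℂ V5), Function.Injective σ ∧
      ∀ i, B i = p (σ i) := by
  obtain ⟨κ, f, hf, hsp, hli⟩ := exists_linearIndependent' ℂ p
  let B0 := Module.Basis.mk hli (by rw [hsp, h])
  have : Finite κ := Finite.of_injective f hf
  have := Fintype.ofFinite κ
  have hcard : Fintype.card κ = 5 := by
    rw [← Module.finrank_eq_card_basis B0]; simp
  let e : κ ≃ Fin 5 := Fintype.equivFinOfCardEq hcard
  refine ⟨f ∘ e.symm, B0.reindex e, hf.comp e.symm.injective, ?_⟩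
  intro i
  simp [B0]

/-- Any four of the points are independent. -/
def Indep4 (p : Fin 7 → V5) : Prop :=
  ∀ i j k l : Fin 7, i ≠ j → i ≠ k → i ≠ l → j ≠ k → j ≠ l → k ≠ l →
    ∀ α β γ δ : ℂ, α • p i + β • p j + γ • p k + δ • p l = 0 → α = 0

theorem sum_perm (B : Module.Basis (Fin 5) ℂ V5) (τ : Equiv.Perm (Fin 5)) (w : V5) :
    w = B.repr w (τ 0) • B (τ 0) + B.repr w (τ 1) • B (τ 1) + B.repr w (τ 2) • B (τ 2) +
      B.repr w (τ 3) • B (τ 3) + B.repr w (τ 4) • B (τ 4) := by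
  conv_lhs => rw [← B.sum_repr w, ← Equiv.sum_comp τ, Fin.sum_univ_five]

theorem exists_third : ∀ m n : Fin 5, ∃ k : Fin 5, m ≠ k ∧ n ≠ k := by decide

theorem exists_two : ∀ l : Fin 5, ∃ m n : Fin 5, l ≠ m ∧ l ≠ n ∧ m ≠ n := by decide

theorem zeros_le (p : Fin 7 → V5) (H : Indep4 p) (σ : Fin 5 → Fin 7)
    (B : Module.Basis (Fin 5) ℂ V5) (hσ : Function.Injective σ) (hB : ∀ i, B i = p (σ i))
    (u : Fin 7) (hu : ∀ i, u ≠ σ i) (m n : Fin 5) (hmn : m ≠ n)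
    (hm : B.repr (p u) m = 0) (hn : B.repr (p u) n = 0) : False := by
  obtain ⟨k, hk1, hk2⟩ : ∃ k : Fin 5, m ≠ k ∧ n ≠ k := exists_third m n
  obtain ⟨τ, h0, h1, -⟩ := exists_perm3 m n k hmn hk1 hk2
  have e := sum_perm B τ (p u)
  rw [h0, h1, hm, hn] at e
  simp only [hB] at e
  have hne : ∀ i j, i ≠ j → σ (τ i) ≠ σ (τ j) := fun i j hij h => hij (τ.injective (hσ h))
  have := H u (σ (τ 2)) (σ (τ 3)) (σ (τ 4)) (hu _) (hu _) (hu _)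
    (hne _ _ (by decide)) (hne _ _ (by decide)) (hne _ _ (by decide))
    (-1) (B.repr (p u) (τ 2)) (B.repr (p u) (τ 3)) (B.repr (p u) (τ 4)) (by
      nth_rewrite 1 [e]
      module)
  norm_num at this

theorem exists_arr (p : Fin 7 → V5) (h : Submodule.span ℂ (Set.range p) = ⊤) (H : Indep4 p) :
    ∃ (σ : Fin 5 → Fin 7) (B : Module.Basis (Fin 5) ℂ V5) (u v : Fin 7), Function.Injective σ ∧
      (∀ i, B i = p (σ i)) ∧ u ≠ v ∧
      B.repr (p u) 0 * B.repr (p v) 0 ≠ 0 ∧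
      B.repr (p u) 1 * B.repr (p v) 2 - B.repr (p u) 2 * B.repr (p v) 1 ≠ 0 := by
  obtain ⟨σ, B, hσ, hB⟩ := exists_basis p h
  have hcard : (Finset.univ \ Finset.univ.image σ).card = 2 := by
    rw [Finset.card_sdiff_of_subset (Finset.subset_univ _), Finset.card_image_of_injective _ hσ]
    simp
  obtain ⟨u, v, huv, hset⟩ := Finset.card_eq_two.mp hcard
  have hu : ∀ i, u ≠ σ i := by
    have : u ∈ Finset.univ \ Finset.univ.image σ := by rw [hset]; simp
    simp at this
    exact fun i hi => this i hi.symm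
  have hv : ∀ i, v ≠ σ i := by
    have : v ∈ Finset.univ \ Finset.univ.image σ := by rw [hset]; simp
    simp at this
    exact fun i hi => this i hi.symm
  have zu := zeros_le p H σ B hσ hB u hu
  have zv := zeros_le p H σ B hσ hB v hv
  set a := B.repr (p u) with ha
  set b := B.repr (p v) with hb
  obtain ⟨l, hl⟩ : ∃ l, a l * b l ≠ 0 := by
    by_contra! hcon
    have hc : ∀ l, a l = 0 ∨ b l = 0 := fun l => mul_eq_zero.mp (hcon l)
    have n01 := zu 0 1 (by decide)
    have n02 := zu 0 2 (by decide)
    have n12 := zu 1 2 (by decide)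
    have m01 := zv 0 1 (by decide)
    have m02 := zv 0 2 (by decide)
    have m12 := zv 1 2 (by decide)
    rcases hc 0 with h0 | h0 <;> rcases hc 1 with h1 | h1 <;> rcases hc 2 with h2 | h2
    · exact n01 h0 h1
    · exact n01 h0 h1
    · exact n02 h0 h2
    · exact m12 h1 h2
    · exact n12 h1 h2
    · exact m02 h0 h2
    · exact m01 h0 h1
    · exact m01 h0 h1
  obtain ⟨i, j, hli, hlj, hij, hmin⟩ : ∃ i j, l ≠ i ∧ l ≠ j ∧ i ≠ j ∧ a i * b j - a j * b i ≠ 0 := by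
    by_contra! hcon
    obtain ⟨m, n, hm, hn, hmn⟩ : ∃ m n : Fin 5, l ≠ m ∧ l ≠ n ∧ m ≠ n := exists_two l
    -- some index `m` with `b m ≠ 0`
    obtain ⟨m, hm, hbm⟩ : ∃ m, l ≠ m ∧ b m ≠ 0 := by
      by_cases h1 : b m = 0
      · exact ⟨n, hn, fun h2 => zv m n hmn h1 h2⟩
      · exact ⟨m, hm, h1⟩
    obtain ⟨n, hn, hmn⟩ : ∃ n : Fin 5, l ≠ n ∧ m ≠ n := exists_third l m
    have e : b m • p u - a m • p v = (b m * a l - a m * b l) • p (σ l) := by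
      apply B.repr.injective
      ext k
      rw [← hB]
      by_cases hk : l = k
      · subst hk
        simp [← ha, ← hb]
      · by_cases hk2 : m = k
        · subst hk2
          simp [← ha, ← hb, Finsupp.single_apply, hk]
          ring
        · have := hcon m k hm hk hk2
          simp [← ha, ← hb, Finsupp.single_apply, hk]
          linear_combination -this
    apply hbm
    refine H u v (σ l) (σ n) huv (hu _) (hu _) (hv _) (hv _) (fun h => hn (hσ h))
      (b m) (-a m) (-(b m * a l - a m * b l)) 0 ?_
    rw [neg_smul (b m * a l - a m * b l), ← e]
    module
  obtain ⟨τ, h0, h1, h2⟩ := exists_perm3 l i j hli hlj hij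
  refine ⟨σ ∘ τ, B.reindex τ.symm, u, v, hσ.comp τ.injective, ?_, huv, ?_, ?_⟩
  · intro i
    simp [hB]
  · simpa [h0] using hl
  · simpa [h1, h2] using hmin

/-- Let `Z = {P₁, …, P₇}` be a nondegenerate set of 7 points in ℙ⁴ (i.e. `Z` spans ℙ⁴).
Then for a general point `x` of ℙ⁴ (all `x` in a nonempty Zariski-open set), the image
of `Z` under the projection from `x` to a hyperplane ℙ³ (realized by a surjective linear
map `L : ℂ⁵ → ℂ⁴` whose kernel is the line of `x`) is not contained in any twisted cubic
curve in ℙ³. -/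
theorem stmt_8 (Z : Fin 7 → P4) (hinj : Function.Injective Z)
    (hndg : Submodule.span ℂ (Set.range fun i => (Z i).rep) = ⊤) :
    ∃ F : MvPolynomial (Fin 5) ℂ, F ≠ 0 ∧ (∃ n, F.IsHomogeneous n) ∧
      ∀ x : P4, MvPolynomial.eval x.rep F ≠ 0 →
        ∀ L : V5 →ₗ[ℂ] V4, Function.Surjective L →
          LinearMap.ker L = Submodule.span ℂ {x.rep} →
          ¬ ∃ A : V4 ≃ₗ[ℂ] V4, ∀ i, OnTwistedCubic A (L ((Z i).rep)) := by
  set p : Fin 7 → V5 := fun i => (Z i).rep with hpdef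
  have hp : ∀ i j, i ≠ j → ∀ κ : ℂ, p i ≠ κ • p j := by
    intro i j hij κ h
    apply hij
    apply hinj
    rw [← (Z i).mk_rep, ← (Z j).mk_rep]
    exact (Projectivization.mk_eq_mk_iff' ℂ _ _ _ _).mpr ⟨κ, h.symm⟩
  obtain ⟨F0, hF0, ⟨n0, hn0⟩, hline⟩ := exists_F0 p
  by_cases H : Indep4 p
  · obtain ⟨σ, B, u, v, hσ, hB, huv, hl, hm⟩ := exists_arr p hndg H
    let l : Fin 5 → MvPolynomial (Fin 5) ℂ := fun i => toPoly (B.coord i)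
    have hlhom : ∀ i, (l i).IsHomogeneous 1 := fun i => toPoly_hom _
    have hleval : ∀ x i, MvPolynomial.eval x (l i) = B.repr x i := fun x i => by
      simp [l, eval_toPoly]
    have hl0 : ∀ i, l i ≠ 0 := by
      intro i h
      have := hleval (B i) i
      rw [h] at this
      simp at this
    let W := (wmat (fun i => MvPolynomial.C (B.repr (p u) i))
      (fun i => MvPolynomial.C (B.repr (p v) i)) l).det
    have hWeval : ∀ x, MvPolynomial.eval x W =
        (wmat (B.repr (p u)) (B.repr (p v)) (B.repr x)).det := by
      intro x
      simp only [W, wdet_eval, hleval]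
    obtain ⟨n1, hn1⟩ := wdet_hom (B.repr (p u)) (B.repr (p v)) l hlhom
    have hW0 : W ≠ 0 := by
      intro h
      obtain ⟨y, hy⟩ := wdet_ne _ _ hl hm
      apply hy
      have := hWeval (B.equivFun.symm y)
      rw [h, map_zero, ← B.equivFun_apply (B.equivFun.symm y),
        LinearEquiv.apply_symm_apply] at this
      exact this.symm
    refine ⟨F0 * (∏ i, l i) * W,
      mul_ne_zero (mul_ne_zero hF0 (Finset.prod_ne_zero_iff.mpr fun i _ => hl0 i)) hW0,
      ⟨_, (hn0.mul (MvPolynomial.IsHomogeneous.prod _ _ _ fun i _ => hlhom i)).mul hn1⟩, ?_⟩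
    intro x hx L _ hker
    rintro ⟨A, hA⟩
    simp only [map_mul, map_prod, hleval, hWeval] at hx
    have hxW := right_ne_zero_of_mul hx
    have hx1 := left_ne_zero_of_mul hx
    have hx2 := left_ne_zero_of_mul hx1
    have hxi : ∀ i, B.repr x.rep i ≠ 0 := fun i =>
      Finset.prod_ne_zero_iff.mp (right_ne_zero_of_mul hx1) i (Finset.mem_univ i)
    obtain ⟨s, t, c, hst, hc, hD, hφ⟩ := cubic_data p hp x.rep L hker
      (fun i j α β h => hx2 (by rw [h]; exact hline i j α β)) A hA
    apply hxW
    apply wdet_zero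
    have expand : ∀ (φ : V5 →ₗ[ℂ] ℂ) (w : V5),
        ∑ i, B.repr w i * φ (p (σ i)) = φ w := by
      intro φ w
      conv_rhs => rw [← B.sum_repr w, map_sum]
      simp [hB]
    refine bilin_of_rel (B.repr x.rep) (B.repr (p u)) (B.repr (p v)) (c ∘ σ) (s ∘ σ) (t ∘ σ)
      (c u) (s u) (t u) (c v) (s v) (t v) hxi (fun i => hc _)
      (fun i j hij => hD _ _ fun h => hij (hσ h)) (hD u v huv) (fun i => hst _) ?_ ?_ ?_
    all_goals
      intro P Q
      obtain ⟨φ, h1, h2⟩ := hφ P Q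
    · rw [← h1, ← expand]
      refine Finset.sum_congr rfl fun i _ => ?_
      rw [h2, mul_assoc]; rfl
    · rw [← h2, ← expand]
      refine Finset.sum_congr rfl fun i _ => ?_
      rw [h2, mul_assoc]; rfl
    · rw [← h2, ← expand]
      refine Finset.sum_congr rfl fun i _ => ?_
      rw [h2, mul_assoc]; rfl
  · refine ⟨F0, hF0, ⟨n0, hn0⟩, ?_⟩
    intro x hx L _ hker
    rintro ⟨A, hA⟩
    obtain ⟨s, t, c, hst, hc, hD, hφ⟩ := cubic_data p hp x.rep L hker
      (fun i j α β h => hx (by rw [h]; exact hline i j α β)) A hA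
    apply H
    intro i j k l hij hik hil _ _ _ α β γ δ h
    obtain ⟨φ, -, h2⟩ := hφ ![t j, t k, t l] ![-s j, -s k, -s l]
    have e := congrArg φ h
    simp only [map_add, map_smul, map_zero, h2, smul_eq_mul] at e
    have e' : α * (c i * ((s i * t j - s j * t i) * (s i * t k - s k * t i) *
        (s i * t l - s l * t i))) = 0 := by
      rw [← e]
      simp [cub]
      ring
    exact (mul_eq_zero.mp e').resolve_right (mul_ne_zero (hc i)
      (mul_ne_zero (mul_ne_zero (hD _ _ hij) (hD _ _ hik)) (hD _ _ hil)))
end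
end
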